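/- Topological completeness of S4D: for every bimodal formula A, A ∈ S4D if and only if A is valid in every topological space (under topological semantics with □ interpreted as interior and [≠] as 'true at all other points'). -/

import Mathlib

/-!
For completeness, a non-theorem is first refuted in the canonical Kripke frame, whose points are the
complete consistent theories and which is an S4D-frame. In an S4D-frame the reflexive closure of
`R_D` is an equivalence relation containing `R`, so it suffices to look at one equivalence class, on
which any two distinct points are `R_D`-related. There `R_D` differs from genuine inequality only in
that some points are `R_D`-related to themselves. Replacing each of these by two copies turns `R_D`
into inequality without changing which formulas are true, and the Alexandrov topology of `R` then
turns the frame into a topological space.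
-/

/-- Bimodal formulas: propositional letters, falsum, implication, box, and
the difference modality `[≠]` (called `dbox` here). -/
inductive BForm : Type
  | var : ℕ → BForm
  | bot : BForm
  | imp : BForm → BForm → BForm
  | box : BForm → BForm
  | dbox : BForm → BForm
  deriving DecidableEq

namespace BForm

/-- Classical negation. -/
def neg (A : BForm) : BForm := imp A bot

/-- Classical conjunction. -/
def conj (A B : BForm) : BForm := neg (imp A (neg B))

/-- `◇A = ¬□¬A`. -/
def dia (A : BForm) : BForm := neg (box (neg A))

/-- `⟨≠⟩A = ¬[≠]¬A`. -/
def ddia (A : BForm) : BForm := neg (dbox (neg A))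

end BForm

/-- Truth at a point of a Kripke model over a frame `(W, R, R_D)`. -/
def ksat {W : Type} (R RD : W → W → Prop) (θ : ℕ → Set W) : W → BForm → Prop
  | x, .var n => x ∈ θ n
  | _, .bot => False
  | x, .imp A B => ksat R RD θ x A → ksat R RD θ x B
  | x, .box A => ∀ y, R x y → ksat R RD θ y A
  | x, .dbox A => ∀ y, RD x y → ksat R RD θ y A

/-- Validity in a Kripke frame: truth at every point under every valuation. -/
def kvalid {W : Type} (R RD : W → W → Prop) (A : BForm) : Prop :=
  ∀ (θ : ℕ → Set W) (x : W), ksat R RD θ x A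

/-- Truth at a point of a topological model. -/
def tsat {X : Type} [TopologicalSpace X] (θ : ℕ → Set X) : X → BForm → Prop
  | x, .var n => x ∈ θ n
  | _, .bot => False
  | x, .imp A B => tsat θ x A → tsat θ x B
  | x, .box A => ∃ U : Set X, IsOpen U ∧ x ∈ U ∧ ∀ y ∈ U, tsat θ y A
  | x, .dbox A => ∀ y, y ≠ x → tsat θ y A

/-- Validity in a topological space. -/
def tvalid (X : Type) [TopologicalSpace X] (A : BForm) : Prop :=
  ∀ (θ : ℕ → Set X) (x : X), tsat θ x A

/-- Uniform substitution of formulas for propositional letters. -/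
def substF (σ : ℕ → BForm) : BForm → BForm
  | .var n => σ n
  | .bot => .bot
  | .imp A B => .imp (substF σ A) (substF σ B)
  | .box A => .box (substF σ A)
  | .dbox A => .dbox (substF σ A)

/-- Boolean evaluation of a formula, treating letters and modal formulas as atoms. -/
def beval (v : BForm → Bool) : BForm → Bool
  | .var n => v (.var n)
  | .bot => false
  | .imp A B => !(beval v A) || beval v B
  | .box A => v (.box A)
  | .dbox A => v (.dbox A)

/-- A classical tautology of the bimodal language. -/
def Tautology (A : BForm) : Prop := ∀ v : BForm → Bool, beval v A = true

/-- The letter `p`. -/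
def pLet : BForm := .var 0
/-- The letter `q`. -/
def qLet : BForm := .var 1

/-- The least bimodal logic containing `K₂`, the S4D axioms and the extra axioms `Ax`,
closed under modus ponens, uniform substitution, and both necessitation rules. -/
inductive Logic (Ax : Set BForm) : BForm → Prop
  | taut {A : BForm} : Tautology A → Logic Ax A
  | axKBox : Logic Ax (.imp (.box (.imp pLet qLet)) (.imp (.box pLet) (.box qLet)))
  | axKD : Logic Ax (.imp (.dbox (.imp pLet qLet)) (.imp (.dbox pLet) (.dbox qLet)))
  | axBD : Logic Ax (.imp pLet (.dbox (BForm.ddia pLet)))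
  | ax4mD : Logic Ax (.imp (BForm.conj pLet (.dbox pLet)) (.dbox (.dbox pLet)))
  | axTBox : Logic Ax (.imp (.box pLet) pLet)
  | ax4Box : Logic Ax (.imp (.box pLet) (.box (.box pLet)))
  | axDBox : Logic Ax (.imp (BForm.conj (.dbox pLet) pLet) (.box pLet))
  | extra {A : BForm} : A ∈ Ax → Logic Ax A
  | mp {A B : BForm} : Logic Ax (.imp A B) → Logic Ax A → Logic Ax B
  | subst {A : BForm} (σ : ℕ → BForm) : Logic Ax A → Logic Ax (substF σ A)
  | necBox {A : BForm} : Logic Ax A → Logic Ax (.box A)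
  | necD {A : BForm} : Logic Ax A → Logic Ax (.dbox A)

/-- The axiom (DS): `[≠]p → ◇p`. -/
def dsAx : BForm := .imp (.dbox pLet) (BForm.dia pLet)

/-- The axiom (AT₁): `[≠]p → [≠]□p`. -/
def at1Ax : BForm := .imp (.dbox pLet) (.dbox (.box pLet))

/-- The logic S4D. -/
def S4D : BForm → Prop := Logic ∅

/-- The logic S4DS = S4D + (DS). -/
def S4DS : BForm → Prop := Logic {dsAx}

/-- The logic S4DT1S = S4DS + (AT₁). -/
def S4DT1S : BForm → Prop := Logic {dsAx, at1Ax}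

/-- `(W, R, R_D)` is an S4D-frame: `R` is reflexive and transitive, `R_D` is
symmetric and pseudo-transitive, and `R ⊆ R_D ∪ Id`. -/
structure IsS4DFrame {W : Type} (R RD : W → W → Prop) : Prop where
  refl : ∀ x, R x x
  trans : ∀ ⦃x y z⦄, R x y → R y z → R x z
  symm : ∀ ⦃x y⦄, RD x y → RD y x
  ptrans : ∀ ⦃x y z⦄, RD x y → RD y z → x ≠ z → RD x z
  inc : ∀ ⦃x y⦄, R x y → RD x y ∨ x = y

/-- A T₁-frame: every `R_D`-irreflexive point is `R`-minimal. -/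
def IsT1Frame {W : Type} (R RD : W → W → Prop) : Prop :=
  ∀ x, ¬ RD x x → ∀ y, R y x → y = x

/-- A DS-frame: every `R_D`-irreflexive point has an `R`-successor distinct from itself. -/
def IsDSFrame {W : Type} (R RD : W → W → Prop) : Prop :=
  ∀ x, ¬ RD x x → ∃ y, y ≠ x ∧ R x y

/-- A cd-p-morphism from a topological space `X` onto a Kripke frame `(W, R, R_D)`. -/
structure IsCdPMorphism {X : Type} [TopologicalSpace X] {W : Type}
    (R RD : W → W → Prop) (f : X → W) : Prop where
  surj : Function.Surjective f
  cl : ∀ w : W, closure (f ⁻¹' {w}) = f ⁻¹' {v | R v w}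
  diff : ∀ w : W, {x : X | ∃ y, y ≠ x ∧ f y = w} = f ⁻¹' {v | RD v w}

/-- A p-morphism between Kripke frames. -/
structure IsPMorphism {W W' : Type} (R RD : W → W → Prop) (R' RD' : W' → W' → Prop)
    (f : W → W') : Prop where
  surj : Function.Surjective f
  forth : ∀ ⦃x y⦄, R x y → R' (f x) (f y)
  forthD : ∀ ⦃x y⦄, RD x y → RD' (f x) (f y)
  back : ∀ x z, R' (f x) z → ∃ y, R x y ∧ f y = z
  backD : ∀ x z, RD' (f x) z → ∃ y, RD x y ∧ f y = z

/-- The Alexandrov topology on `W` whose open sets are the `R`-upward-closed sets. -/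
def alexandrov {W : Type} (R : W → W → Prop) : TopologicalSpace W where
  IsOpen U := ∀ ⦃x⦄, x ∈ U → ∀ ⦃y⦄, R x y → y ∈ U
  isOpen_univ := fun _ _ _ _ => trivial
  isOpen_inter := fun _ _ hU hV x hx y hxy => ⟨hU hx.1 hxy, hV hx.2 hxy⟩
  isOpen_sUnion := fun _ hS x hx y hxy => by
    obtain ⟨U, hU, hxU⟩ := hx
    exact ⟨U, hU, hS U hU hxU hxy⟩

/-! ### Soundness -/

section Soundness

variable {X : Type} [TopologicalSpace X] {A B : BForm}

theorem tsat_conj {θ : ℕ → Set X} {x : X} :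
    tsat θ x (A.conj B) ↔ tsat θ x A ∧ tsat θ x B := by
  simp only [BForm.conj, BForm.neg, tsat]
  tauto

theorem tsat_substF (θ : ℕ → Set X) (σ : ℕ → BForm) (A : BForm) (x : X) :
    tsat θ x (substF σ A) ↔ tsat (fun n => {y | tsat θ y (σ n)}) x A := by
  induction A generalizing x with
  | var n => rfl
  | bot => rfl
  | imp A B ihA ihB => simp only [substF, tsat, ihA, ihB]
  | box A ih => simp only [substF, tsat, ih]
  | dbox A ih => simp only [substF, tsat, ih]

theorem beval_imp {v : BForm → Bool} :
    beval v (A.imp B) = true ↔ (beval v A = true → beval v B = true) := by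
  simp only [beval, Bool.or_eq_true, Bool.not_eq_true', ← Bool.not_eq_true, imp_iff_not_or]

theorem beval_neg {v : BForm → Bool} : beval v A.neg = true ↔ ¬beval v A = true := by
  simp [BForm.neg, beval]

open Classical in
theorem beval_decide_tsat (θ : ℕ → Set X) (x : X) (A : BForm) :
    beval (fun B => decide (tsat θ x B)) A = true ↔ tsat θ x A := by
  induction A with
  | bot => simp [beval, tsat]
  | imp A B ihA ihB => rw [beval_imp, ihA, ihB, tsat]
  | _ => simp [beval]

theorem Tautology.tvalid (h : Tautology A) : tvalid X A :=
  fun θ x => (beval_decide_tsat θ x A).1 (h _)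

theorem Logic.tvalid {Ax : Set BForm} (hAx : ∀ B ∈ Ax, tvalid X B) (h : Logic Ax A) :
    tvalid X A := by
  induction h with
  | taut h => exact h.tvalid
  | axKBox =>
    rintro θ x ⟨U, hU, hxU, hpq⟩ ⟨V, hV, hxV, hp⟩
    exact ⟨U ∩ V, hU.inter hV, ⟨hxU, hxV⟩, fun y hy => hpq y hy.1 (hp y hy.2)⟩
  | axKD => exact fun θ x hpq hp y hy => hpq y hy (hp y hy)
  | axBD => exact fun θ x hp y hy hnp => hnp x hy.symm hp
  | ax4mD =>
    intro θ x hp y _ z _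
    obtain ⟨hx, hne⟩ := tsat_conj.1 hp
    obtain rfl | hzx := eq_or_ne z x
    exacts [hx, hne z hzx]
  | axTBox => exact fun θ x ⟨_, _, hxU, hp⟩ => hp x hxU
  | ax4Box => exact fun θ x ⟨U, hU, hxU, hp⟩ => ⟨U, hU, hxU, fun y hy => ⟨U, hU, hy, hp⟩⟩
  | axDBox =>
    intro θ x hp
    obtain ⟨hne, hx⟩ := tsat_conj.1 hp
    refine ⟨Set.univ, isOpen_univ, Set.mem_univ x, fun y _ => ?_⟩
    obtain rfl | hyx := eq_or_ne y x
    exacts [hx, hne y hyx]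
  | extra h => exact hAx _ h
  | mp _ _ ihAB ihA => exact fun θ x => ihAB θ x (ihA θ x)
  | subst σ _ ih => exact fun θ x => (tsat_substF θ σ _ x).2 (ih _ x)
  | necBox _ ih => exact fun θ x => ⟨Set.univ, isOpen_univ, Set.mem_univ x, fun y _ => ih θ y⟩
  | necD _ ih => exact fun θ x y _ => ih θ y

end Soundness

/-! ### Bounded morphisms -/

section BoundedMorphism

variable {W W' : Type} {R RD : W → W → Prop} {R' RD' : W' → W' → Prop}

/-- A bounded morphism between Kripke frames: a p-morphism (`IsPMorphism`) that need not be onto.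
Dropping surjectivity lets inclusions of generated subframes qualify. -/
structure IsBoundedMorphism (R RD : W → W → Prop) (R' RD' : W' → W' → Prop) (f : W → W') :
    Prop where
  forth : ∀ ⦃x y⦄, R x y → R' (f x) (f y)
  forthD : ∀ ⦃x y⦄, RD x y → RD' (f x) (f y)
  back : ∀ ⦃x z⦄, R' (f x) z → ∃ y, R x y ∧ f y = z
  backD : ∀ ⦃x z⦄, RD' (f x) z → ∃ y, RD x y ∧ f y = z

theorem forall_rel_map_iff {S : W → W → Prop} {S' : W' → W' → Prop} {f : W → W'} {x : W}
    (forth : ∀ ⦃y⦄, S x y → S' (f x) (f y)) (back : ∀ ⦃z⦄, S' (f x) z → ∃ y, S x y ∧ f y = z)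
    (P : W' → Prop) : (∀ y, S x y → P (f y)) ↔ ∀ z, S' (f x) z → P z := by
  refine ⟨fun h z hz => ?_, fun h y hy => h _ (forth hy)⟩
  obtain ⟨y, hy, rfl⟩ := back hz
  exact h y hy

theorem IsBoundedMorphism.ksat_iff {f : W → W'} (hf : IsBoundedMorphism R RD R' RD' f)
    (θ : ℕ → Set W') (A : BForm) (x : W) :
    ksat R RD (fun n => f ⁻¹' θ n) x A ↔ ksat R' RD' θ (f x) A := by
  induction A generalizing x with
  | var n => rfl
  | bot => rfl
  | imp A B ihA ihB => simp only [ksat, ihA, ihB]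
  | box A ih =>
    simp only [ksat, ih]
    exact forall_rel_map_iff (hf.forth (x := x)) (hf.back (x := x)) (ksat R' RD' θ · A)
  | dbox A ih =>
    simp only [ksat, ih]
    exact forall_rel_map_iff (hf.forthD (x := x)) (hf.backD (x := x)) (ksat R' RD' θ · A)

theorem isBoundedMorphism_subtype_val {p : W → Prop} (hR : ∀ ⦃x y⦄, p x → R x y → p y)
    (hRD : ∀ ⦃x y⦄, p x → RD x y → p y) :
    IsBoundedMorphism (InvImage R (Subtype.val : Subtype p → W)) (InvImage RD Subtype.val)
      R RD Subtype.val where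
  forth _ _ h := h
  forthD _ _ h := h
  back x z h := ⟨⟨z, hR x.2 h⟩, h, rfl⟩
  backD x z h := ⟨⟨z, hRD x.2 h⟩, h, rfl⟩

/-- The frame with every `R_D`-reflexive point split into two copies. It serves to turn `R_D` into
inequality. The copies are told apart by `copy`, which is `false` at all `R_D`-irreflexive
points. -/
@[ext]
structure Splitting (RD : W → W → Prop) : Type where
  point : W
  copy : Bool
  rel_self : copy = true → RD point point

theorem Splitting.isBoundedMorphism_point (hRD : Pairwise RD) :
    IsBoundedMorphism (InvImage R (point : Splitting RD → W)) (· ≠ ·) R RD point where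
  forth _ _ h := h
  forthD x y hxy := by
    by_cases hpt : x.point = y.point
    · have hcopy : x.copy ≠ y.copy := fun h => hxy (Splitting.ext hpt h)
      cases hx : x.copy with
      | true => exact hpt ▸ x.rel_self hx
      | false => exact hpt ▸ y.rel_self (by simpa [hx] using hcopy.symm)
    · exact hRD hpt
  back x z h := ⟨⟨z, false, nofun⟩, h, rfl⟩
  backD x z h := by
    by_cases hz : x.point = z
    · subst hz
      exact ⟨⟨x.point, !x.copy, fun _ => h⟩,
        fun hx => Bool.not_ne_self x.copy (congrArg copy hx).symm, rfl⟩
    · exact ⟨⟨z, false, nofun⟩, fun hx => hz (congrArg point hx), rfl⟩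

end BoundedMorphism

/-! ### From S4D-frames to topological spaces -/

section Frame

variable {W : Type} {R RD : W → W → Prop}

theorem tsat_alexandrov_iff (hrefl : ∀ x, R x x) (htrans : ∀ ⦃x y z⦄, R x y → R y z → R x z)
    (θ : ℕ → Set W) (A : BForm) (x : W) :
    @tsat W (alexandrov R) θ x A ↔ ksat R (· ≠ ·) θ x A := by
  induction A generalizing x with
  | var n => rfl
  | bot => rfl
  | imp A B ihA ihB => simp only [tsat, ksat, ihA, ihB]
  | box A ih =>
    simp only [tsat, ksat, ih]
    -- The smallest neighbourhood of `x` consists of its `R`-successors.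
    exact ⟨fun ⟨_, hU, hxU, hA⟩ y hxy => hA y (hU hxU hxy),
      fun hA => ⟨{y | R x y}, fun y hxy z hyz => htrans hxy hyz, hrefl x, hA⟩⟩
  | dbox A ih => simp only [tsat, ksat, ih, ne_comm]

theorem kvalid_of_pairwise (hrefl : ∀ x, R x x) (htrans : ∀ ⦃x y z⦄, R x y → R y z → R x z)
    (hRD : Pairwise RD) {A : BForm} (hA : ∀ (X : Type) [TopologicalSpace X], tvalid X A) :
    kvalid R RD A := by
  intro θ x
  have hproj := Splitting.isBoundedMorphism_point (R := R) hRD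
  rw [← hproj.ksat_iff θ A ⟨x, false, nofun⟩,
    ← tsat_alexandrov_iff (R := InvImage R Splitting.point) (fun _ => hrefl _)
      (fun _ _ _ h h' => htrans h h')]
  exact @hA _ (alexandrov _) _ _

namespace IsS4DFrame

theorem equivalence_reflGen (hF : IsS4DFrame R RD) : Equivalence (Relation.ReflGen RD) where
  refl _ := .refl
  symm h := by
    cases h with
    | refl => exact .refl
    | single h => exact .single (hF.symm h)
  trans {x y z} hxy hyz := by
    cases hxy with
    | refl => exact hyz
    | single hxy =>
      cases hyz with
      | refl => exact .single hxy
      | single hyz =>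
        by_cases hxz : x = z
        · exact hxz ▸ .refl
        · exact .single (hF.ptrans hxy hyz hxz)

theorem reflGen_of_rel (hF : IsS4DFrame R RD) {x y : W} (h : R x y) : Relation.ReflGen RD x y :=
  (hF.inc h).elim .single fun hxy => hxy ▸ .refl

theorem pairwise_reflGen_class (hF : IsS4DFrame R RD) (r : W) :
    Pairwise (InvImage RD (Subtype.val : {x // Relation.ReflGen RD r x} → W)) := by
  intro x y hxy
  have hE := hF.equivalence_reflGen
  have h : Relation.ReflGen RD x y := hE.trans (hE.symm x.2) y.2
  exact ((Relation.reflGen_iff RD _ _).1 h).resolve_left fun hyx => hxy (Subtype.ext hyx.symm)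

theorem kvalid_of_forall_tvalid (hF : IsS4DFrame R RD) {A : BForm}
    (hA : ∀ (X : Type) [TopologicalSpace X], tvalid X A) : kvalid R RD A := by
  intro θ r
  have hE := hF.equivalence_reflGen
  have hincl := isBoundedMorphism_subtype_val (p := Relation.ReflGen RD r)
    (fun _ _ hx h => hE.trans hx (hF.reflGen_of_rel h)) (fun _ _ hx h => hE.trans hx (.single h))
  rw [← hincl.ksat_iff θ A ⟨r, .refl⟩]
  exact kvalid_of_pairwise (R := InvImage R Subtype.val) (fun _ => hF.refl _)
    (fun _ _ _ h h' => hF.trans h h') (hF.pairwise_reflGen_class r) hA _ _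

end IsS4DFrame

end Frame

/-! ### Theories -/

/-- A theory over `Logic Ax`: a set of formulas containing the logic and closed under modus ponens,
but not necessarily under substitution and necessitation. -/
structure IsTheory (Ax T : Set BForm) : Prop where
  thm : ∀ {A}, Logic Ax A → A ∈ T
  mp : ∀ {A B}, BForm.imp A B ∈ T → A ∈ T → B ∈ T

namespace IsTheory

variable {Ax T : Set BForm} {A B C : BForm}

theorem mem_of_beval (hT : IsTheory Ax T) (hA : A ∈ T)
    (h : ∀ v, beval v A = true → beval v B = true) : B ∈ T :=
  hT.mp (hT.thm (.taut fun v => beval_imp.2 (h v))) hA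

theorem mem_of_beval₂ (hT : IsTheory Ax T) (hA : A ∈ T) (hB : B ∈ T)
    (h : ∀ v, beval v A = true → beval v B = true → beval v C = true) : C ∈ T :=
  hT.mp (hT.mem_of_beval hA fun v hv => beval_imp.2 (h v hv)) hB

theorem setOf_imp_mem (hT : IsTheory Ax T) (B : BForm) : IsTheory Ax {C | B.imp C ∈ T} where
  thm h := hT.mem_of_beval (hT.thm h) fun v hv => beval_imp.2 fun _ => hv
  mp h h' := hT.mem_of_beval₂ h h' fun v => by simp only [beval_imp]; tauto

theorem setOf_box_mem (hT : IsTheory Ax T) : IsTheory Ax {A | A.box ∈ T} where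
  thm h := hT.thm h.necBox
  mp {A B} h := hT.mp (hT.mp (hT.thm (.subst (fun | 0 => A | _ => B) .axKBox)) h)

theorem setOf_dbox_mem (hT : IsTheory Ax T) : IsTheory Ax {A | A.dbox ∈ T} where
  thm h := hT.thm h.necD
  mp {A B} h := hT.mp (hT.mp (hT.thm (.subst (fun | 0 => A | _ => B) .axKD)) h)

theorem sUnion_of_isChain {c : Set (Set BForm)} (hc : IsChain (· ⊆ ·) c) (hne : c.Nonempty)
    (h : ∀ S ∈ c, IsTheory Ax S) : IsTheory Ax (⋃₀ c) where
  thm hA := let ⟨S, hS⟩ := hne; ⟨S, hS, (h S hS).thm hA⟩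
  mp := by
    rintro A B ⟨S, hS, hAB⟩ ⟨S', hS', hA⟩
    obtain hSS' | hS'S := hc.total hS hS'
    · exact ⟨S', hS', (h S' hS').mp (hSS' hAB) hA⟩
    · exact ⟨S, hS, (h S hS).mp hAB (hS'S hA)⟩

theorem exists_maximal_notMem (hT : IsTheory Ax T) (hA : A ∉ T) :
    ∃ M, T ⊆ M ∧ Maximal (fun S => IsTheory Ax S ∧ A ∉ S) M := by
  refine zorn_subset_nonempty {S | IsTheory Ax S ∧ A ∉ S} (fun c hc hchain hne => ?_) T ⟨hT, hA⟩
  refine ⟨⋃₀ c, ⟨sUnion_of_isChain hchain hne fun S hS => (hc hS).1, ?_⟩,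
    fun S => Set.subset_sUnion_of_mem⟩
  rintro ⟨S, hS, hAS⟩
  exact (hc hS).2 hAS

theorem imp_mem_of_maximal (hT : Maximal (fun S => IsTheory Ax S ∧ A ∉ S) T) (hB : B ∉ T) :
    B.imp A ∈ T := by
  by_contra hBA
  have hT' := hT.prop.1
  have hsub : T ⊆ {C | B.imp C ∈ T} := fun C hC =>
    hT'.mem_of_beval hC fun v hv => beval_imp.2 fun _ => hv
  exact hB (hT.le_of_ge ⟨hT'.setOf_imp_mem B, hBA⟩ hsub
    (hT'.thm (.taut fun v => beval_imp.2 id)))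

end IsTheory

/-! ### The canonical frame -/

/-- The points of the canonical frame of `Logic Ax`: complete consistent theories, or equivalently
maximal consistent sets of formulas. -/
structure World (Ax : Set BForm) : Type where
  carrier : Set BForm
  isTheory : IsTheory Ax carrier
  bot_notMem : BForm.bot ∉ carrier
  mem_or_neg_mem : ∀ A, A ∈ carrier ∨ A.neg ∈ carrier

instance (Ax : Set BForm) : SetLike (World Ax) BForm where
  coe := World.carrier
  coe_injective u v h := by cases u; cases v; congr

theorem IsTheory.exists_world {Ax T : Set BForm} {A : BForm} (hT : IsTheory Ax T)
    (hA : A ∉ T) : ∃ w : World Ax, T ⊆ w ∧ A ∉ w := by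
  obtain ⟨M, hTM, hM⟩ := hT.exists_maximal_notMem hA
  have ⟨hMT, hAM⟩ := hM.prop
  refine ⟨⟨M, hMT, fun hbot => hAM ?_, fun B => ?_⟩, hTM, hAM⟩
  · exact hMT.mem_of_beval hbot fun v hv => by simp [beval] at hv
  · by_contra! hB
    exact hAM (hMT.mem_of_beval₂ (IsTheory.imp_mem_of_maximal hM hB.1)
      (IsTheory.imp_mem_of_maximal hM hB.2) fun v => by simp only [beval_imp, beval_neg]; tauto)

namespace World

variable {Ax : Set BForm} {u v w : World Ax} {A B : BForm} {m : BForm → BForm}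

theorem neg_mem_iff : A.neg ∈ w ↔ A ∉ w :=
  ⟨fun h hA => w.bot_notMem (w.isTheory.mp h hA), (w.mem_or_neg_mem A).resolve_left⟩

theorem imp_mem_iff : A.imp B ∈ w ↔ (A ∈ w → B ∈ w) := by
  refine ⟨w.isTheory.mp, fun h => ?_⟩
  by_cases hA : A ∈ w
  · exact w.isTheory.mem_of_beval (h hA) fun v hB => beval_imp.2 fun _ => hB
  · exact w.isTheory.mem_of_beval (neg_mem_iff.2 hA) fun v hnA =>
      beval_imp.2 fun hA => absurd hA (beval_neg.1 hnA)

theorem conj_mem_iff : A.conj B ∈ w ↔ A ∈ w ∧ B ∈ w := by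
  simp only [BForm.conj, neg_mem_iff, imp_mem_iff, Classical.not_imp, not_not]

theorem eq_of_subset (h : (u : Set BForm) ⊆ w) : u = w :=
  SetLike.ext fun A => ⟨@h A, fun hAw => by_contra fun hAu =>
    neg_mem_iff.1 (h (neg_mem_iff.2 hAu)) hAw⟩

/-- The canonical accessibility relation of a modality `m`, which is either `□` or `[≠]`. -/
def Rel (m : BForm → BForm) (w v : World Ax) : Prop := ∀ ⦃A⦄, m A ∈ w → A ∈ v

theorem modal_mem_iff (hm : IsTheory Ax {A | m A ∈ w}) :
    m A ∈ w ↔ ∀ v, Rel m w v → A ∈ v := by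
  refine ⟨fun h v hwv => hwv h, fun h => ?_⟩
  by_contra hA
  obtain ⟨v, hwv, hAv⟩ := hm.exists_world hA
  exact hAv (h v hwv)

theorem rel_or_eq (hm : IsTheory Ax {A | m A ∈ u}) (h : ∀ A ∈ u, m A ∈ u → A ∈ w) :
    Rel m u w ∨ u = w := by
  refine or_iff_not_imp_right.2 fun hne A hA => ?_
  by_contra hAw
  obtain ⟨B, hBu, hBw⟩ : ∃ B ∈ u, B ∉ w := by
    by_contra! hsub
    exact hne (eq_of_subset hsub)
  -- The hypothesis `h` fails for `A ∨ B`, written `¬A → B`.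
  have hm_or : m (A.neg.imp B) ∈ u := hm.mem_of_beval hA fun v => by
    simp only [beval_imp, beval_neg]; tauto
  have hor : A.neg.imp B ∈ w := h _ (imp_mem_iff.2 fun _ => hBu) hm_or
  exact hBw (imp_mem_iff.1 hor (neg_mem_iff.2 hAw))

theorem rel_dbox_symm (h : Rel BForm.dbox w v) : Rel BForm.dbox v w := by
  intro A hA
  by_contra hAw
  have hBD : A.neg.ddia.dbox ∈ w := w.isTheory.mp
    (w.isTheory.thm (.subst (fun _ => A.neg) .axBD)) (neg_mem_iff.2 hAw)
  have hnn : A.neg.neg.dbox ∈ v := v.isTheory.setOf_dbox_mem.mem_of_beval hA fun e => by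
    simp only [beval_neg, not_not, imp_self]
  exact neg_mem_iff.1 (h hBD) hnn

theorem isS4DFrame_rel (Ax : Set BForm) :
    IsS4DFrame (Rel (Ax := Ax) BForm.box) (Rel BForm.dbox) where
  refl w A := w.isTheory.mp (w.isTheory.thm (.subst (fun _ => A) .axTBox))
  trans u v w huv hvw A hA :=
    hvw (huv (u.isTheory.mp (u.isTheory.thm (.subst (fun _ => A) .ax4Box)) hA))
  symm _ _ := rel_dbox_symm
  ptrans u v w huv hvw huw := by
    refine (rel_or_eq u.isTheory.setOf_dbox_mem fun A hA hDA => ?_).resolve_right huw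
    exact hvw (huv (u.isTheory.mp (u.isTheory.thm (.subst (fun _ => A) .ax4mD))
      (conj_mem_iff.2 ⟨hA, hDA⟩)))
  inc u w huw := by
    refine rel_or_eq u.isTheory.setOf_dbox_mem fun A hA hDA => ?_
    exact huw (u.isTheory.mp (u.isTheory.thm (.subst (fun _ => A) .axDBox))
      (conj_mem_iff.2 ⟨hDA, hA⟩))

theorem ksat_rel_iff_mem (A : BForm) (w : World Ax) :
    ksat (Rel BForm.box) (Rel BForm.dbox) (fun n => {v : World Ax | BForm.var n ∈ v}) w A ↔
      A ∈ w := by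
  induction A generalizing w with
  | var n => rfl
  | bot => exact iff_of_false id w.bot_notMem
  | imp A B ihA ihB => simp only [ksat, ihA, ihB, imp_mem_iff]
  | box A ih => simp only [ksat, ih, modal_mem_iff w.isTheory.setOf_box_mem]
  | dbox A ih => simp only [ksat, ih, modal_mem_iff w.isTheory.setOf_dbox_mem]

end World

theorem Logic.of_kvalid_world {Ax : Set BForm} {A : BForm}
    (h : kvalid (World.Rel (Ax := Ax) BForm.box) (World.Rel BForm.dbox) A) : Logic Ax A := by
  by_contra hA
  have hT : IsTheory Ax {B | Logic Ax B} := ⟨id, Logic.mp⟩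
  obtain ⟨w, -, hAw⟩ := hT.exists_world hA
  exact hAw ((World.ksat_rel_iff_mem A w).1 (h _ w))

/-- topological completeness of S4D: `A ∈ S4D` iff `A` is valid in
every topological space. -/
theorem s4d_topological_completeness (A : BForm) :
    S4D A ↔ ∀ (X : Type) [TopologicalSpace X], tvalid X A :=
  ⟨fun h _ _ => Logic.tvalid (fun _ hB => absurd hB (Set.notMem_empty _)) h,
    fun h => Logic.of_kvalid_world ((World.isS4DFrame_rel ∅).kvalid_of_forall_tvalid h)⟩
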